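/- Let A be an additive category, B an additive category with countable coproducts, and F : A ⥤ C(B) an additive functor. Then for every morphism f : M^• → N^• in C(A), the extended functor F^C satisfies F^C(Cone(f)) ≅ Cone(F^C(f)): the image under F^C of the mapping cone of f is isomorphic, as a cochain complex over B, to the mapping cone of F^C(f) : F^C(M) → F^C(N). -/

import Mathlib

/-!
An additive functor `F` commutes with mapping cones, so `F^{DC}(Cone f)` is the mapping cone of
`F^{DC}(f)` in the category of complexes of complexes. What remains is that totalization commutes
with mapping cones: `Tot (Cone φ) ≅ Cone (Tot φ)` for a morphism `φ : K ⟶ L` of bicomplexes.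

In degree `n` both sides are the coproduct of the `K^{i+1,j} ⊕ L^{i,j}` with `i + j = n`, and the
identification carries no sign. Indeed `K^{i+1,j}` sits in column `i` of `Cone φ`, so its vertical
differential has sign `(-1)^i` in `Tot (Cone φ)`; in `Cone (Tot φ)` it has sign `-(-1)^(i+1)`, which
is the same. The horizontal differential of `K` is negated on both sides.
-/

open CategoryTheory CategoryTheory.Limits

section ExtensionOfFunctors

variable {A : Type*} [Category A] [Preadditive A] [HasBinaryBiproducts A]
variable {B : Type*} [Category B] [Preadditive B] [HasCountableCoproducts B]

instance hasTotalUpInt (K : HomologicalComplex₂ B (ComplexShape.up ℤ) (ComplexShape.up ℤ)) :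
    K.HasTotal (ComplexShape.up ℤ) :=
  fun _ => inferInstance

instance : HasBinaryBiproducts B := HasBinaryBiproducts.of_hasBinaryCoproducts

/-- Given an additive functor `F : A ⥤ C(B)`, the associated double complex functor
`F^{DC} : C(A) ⥤ DC(B)`: the `i`-th column of `F^{DC}(M)` is the complex `F(M^i)` and its
horizontal differentials are the chain maps `F(d_M^i)`. -/
noncomputable def extDC (F : A ⥤ CochainComplex B ℤ) [F.Additive] :
    CochainComplex A ℤ ⥤
      HomologicalComplex₂ B (ComplexShape.up ℤ) (ComplexShape.up ℤ) :=
  F.mapHomologicalComplex (ComplexShape.up ℤ)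

/-- The extended functor `F^C : C(A) ⥤ C(B)` of an additive functor `F : A ⥤ C(B)`,
obtained by totalizing the double complex `F^{DC}(M)` with the standard sign convention,
so that `F^C(M)^n = ⊕_{i} F(M^i)^{n−i}`. -/
noncomputable def extC (F : A ⥤ CochainComplex B ℤ) [F.Additive] :
    CochainComplex A ℤ ⥤ CochainComplex B ℤ :=
  extDC F ⋙
    HomologicalComplex₂.totalFunctor B (ComplexShape.up ℤ) (ComplexShape.up ℤ)
      (ComplexShape.up ℤ)

section TotalMappingCone

open CochainComplex HomComplex HomologicalComplex₂ ComplexShape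

variable {C : Type*} [Category C] [Preadditive C]

lemma ιTotal_comp_total_d {I₁ I₂ I₁₂ : Type*} [DecidableEq I₁₂] {c₁ : ComplexShape I₁}
    {c₂ : ComplexShape I₂} {c₁₂ : ComplexShape I₁₂} [TotalComplexShape c₁ c₂ c₁₂]
    (K : HomologicalComplex₂ C c₁ c₂) [K.HasTotal c₁₂] {i₁ i₁' : I₁} {i₂ i₂' : I₂}
    (n n' : I₁₂) (h₁ : c₁.Rel i₁ i₁') (h₂ : c₂.Rel i₂ i₂') (h : π c₁ c₂ c₁₂ (i₁, i₂) = n)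
    (h₁' : π c₁ c₂ c₁₂ (i₁', i₂) = n') (h₂' : π c₁ c₂ c₁₂ (i₁, i₂') = n') :
    K.ιTotal c₁₂ i₁ i₂ n h ≫ (K.total c₁₂).d n n' =
      ε₁ c₁ c₂ c₁₂ (i₁, i₂) • ((K.d i₁ i₁').f i₂ ≫ K.ιTotal c₁₂ i₁' i₂ n' h₁') +
        ε₂ c₁ c₂ c₁₂ (i₁, i₂) • ((K.X i₁).d i₂ i₂' ≫ K.ιTotal c₁₂ i₁ i₂' n' h₂') := by
  rw [total_d, Preadditive.comp_add, ι_D₁, ι_D₂, K.d₁_eq c₁₂ h₁ i₂ n' h₁',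
    K.d₂_eq c₁₂ i₁ h₂ n' h₂']

lemma ιTotal_comp_total_d_up (K : HomologicalComplex₂ C (up ℤ) (up ℤ)) [K.HasTotal (up ℤ)]
    {i i' j j' n n' : ℤ} (hi : i + 1 = i') (hj : j + 1 = j') (h : i + j = n)
    (h₁ : i' + j = n') (h₂ : i + j' = n') :
    K.ιTotal (up ℤ) i j n h ≫ (K.total (up ℤ)).d n n' =
      (K.d i i').f j ≫ K.ιTotal (up ℤ) i' j n' h₁ +
        i.negOnePow • ((K.X i).d j j' ≫ K.ιTotal (up ℤ) i j' n' h₂) :=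
  (ιTotal_comp_total_d K n n' hi hj h h₁ h₂).trans (congrArg (· + _) (one_smul ℤˣ _))

variable {K L : HomologicalComplex₂ C (up ℤ) (up ℤ)} (φ : K ⟶ L)
  [HomologicalComplex.HasHomotopyCofiber φ]

/-- The mapping cone of a morphism of bicomplexes, taken in the horizontal direction: its column `i`
is the complex `K^{i+1} ⊕ L^i`. -/
noncomputable def horizontalCone : HomologicalComplex₂ C (up ℤ) (up ℤ) :=
  mappingCone φ

namespace horizontalCone

/-- The inclusion of `K^{i,j}` into the cone. The column index drops by one: `i' = i - 1`. -/
noncomputable def inlX {i i' : ℤ} (j : ℤ) (h : i' + 1 = i) :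
    (K.X i).X j ⟶ ((horizontalCone φ).X i').X j :=
  ((mappingCone.inl φ).v i i' (by lia)).f j

/-- The inclusion of `L` into the cone, as a morphism of bicomplexes. -/
noncomputable def inr : L ⟶ horizontalCone φ :=
  mappingCone.inr φ

/-- The projection from column `i` of the cone onto `K^{i',j}`, where `i' = i + 1`. -/
noncomputable def fstX {i i' : ℤ} (j : ℤ) (h : i + 1 = i') :
    ((horizontalCone φ).X i).X j ⟶ (K.X i').X j :=
  ((mappingCone.fst φ).1.v i i' h).f j

/-- The projection from column `i` of the cone onto `L^{i,j}`. -/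
noncomputable def sndX (i j : ℤ) : ((horizontalCone φ).X i).X j ⟶ (L.X i).X j :=
  ((mappingCone.snd φ).v i i (add_zero i)).f j

lemma inlX_fstX {i i' : ℤ} (j : ℤ) (h : i' + 1 = i) :
    inlX φ j h ≫ fstX φ j h = 𝟙 _ :=
  HomologicalComplex.congr_hom (mappingCone.inl_v_fst_v φ i i' h) j

lemma inlX_sndX {i i' : ℤ} (j : ℤ) (h : i' + 1 = i) : inlX φ j h ≫ sndX φ i' j = 0 :=
  HomologicalComplex.congr_hom (mappingCone.inl_v_snd_v φ i i' (by lia)) j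

lemma inr_f_f_fstX {i i' : ℤ} (j : ℤ) (h : i + 1 = i') : ((inr φ).f i).f j ≫ fstX φ j h = 0 :=
  HomologicalComplex.congr_hom (mappingCone.inr_f_fst_v φ i i' h) j

lemma inr_f_f_sndX (i j : ℤ) : ((inr φ).f i).f j ≫ sndX φ i j = 𝟙 _ :=
  HomologicalComplex.congr_hom (mappingCone.inr_f_snd_v φ i) j

lemma fstX_inlX_add_sndX_inr_f_f {i i' : ℤ} (j : ℤ) (h : i + 1 = i') :
    fstX φ j h ≫ inlX φ j h + sndX φ i j ≫ ((inr φ).f i).f j = 𝟙 _ :=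
  HomologicalComplex.congr_hom (mappingCone.id_X φ i i' h) j

lemma inlX_comp_d_f {i i' i'' : ℤ} (j : ℤ) (h : i' + 1 = i) (h' : i + 1 = i'') :
    inlX φ j h ≫ ((horizontalCone φ).d i' i).f j =
      (φ.f i).f j ≫ ((inr φ).f i).f j - (K.d i i'').f j ≫ inlX φ j h' :=
  HomologicalComplex.congr_hom (mappingCone.inl_v_d φ i i' i'' (by lia) (by lia)) j

lemma inlX_comp_X_d {i i' : ℤ} (j j' : ℤ) (h : i' + 1 = i) :
    inlX φ j h ≫ ((horizontalCone φ).X i').d j j' = (K.X i).d j j' ≫ inlX φ j' h :=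
  ((mappingCone.inl φ).v i i' (by lia)).comm j j'

section Total

variable [K.HasTotal (up ℤ)] [L.HasTotal (up ℤ)]
  [HomologicalComplex.HasHomotopyCofiber (total.map φ (up ℤ))]

/-- The inclusion of `Cone(φ)^{i,j} = K^{i+1,j} ⊕ L^{i,j}` into
`Cone(Tot φ)^n = Tot(K)^{n+1} ⊕ Tot(L)^n`. -/
noncomputable def ιMappingCone (i j n : ℤ) (h : i + j = n) :
    ((horizontalCone φ).X i).X j ⟶ (mappingCone (total.map φ (up ℤ))).X n :=
  fstX φ j rfl ≫ K.ιTotal (up ℤ) (i + 1) j (n + 1) (by dsimp; lia) ≫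
      (mappingCone.inl (total.map φ (up ℤ))).v (n + 1) n (by lia) +
    sndX φ i j ≫ L.ιTotal (up ℤ) i j n h ≫ (mappingCone.inr (total.map φ (up ℤ))).f n

lemma inlX_comp_ιMappingCone {i i' j n n' : ℤ} (hi : i' + 1 = i) (hn : n' + 1 = n)
    (h : i' + j = n') :
    inlX φ j hi ≫ ιMappingCone φ i' j n' h =
      K.ιTotal (up ℤ) i j n (by dsimp; lia) ≫
        (mappingCone.inl (total.map φ (up ℤ))).v n n' (by lia) := by
  subst hi hn
  simp only [ιMappingCone, Preadditive.comp_add, ← Category.assoc, inlX_fstX, inlX_sndX, zero_comp,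
    Category.id_comp, add_zero]

lemma inr_f_f_comp_ιMappingCone (i j n : ℤ) (h : i + j = n) :
    ((inr φ).f i).f j ≫ ιMappingCone φ i j n h =
      L.ιTotal (up ℤ) i j n h ≫ (mappingCone.inr (total.map φ (up ℤ))).f n := by
  simp only [ιMappingCone, Preadditive.comp_add, ← Category.assoc, inr_f_f_fstX, inr_f_f_sndX,
    zero_comp, Category.id_comp, zero_add]

/-- The object `Cone(Tot φ)^n` as a cofan over the entries of `Cone φ` of total degree `n`. -/
noncomputable def mappingConeCofan (n : ℤ) :
    (horizontalCone φ).toGradedObject.CofanMapObjFun (π (up ℤ) (up ℤ) (up ℤ)) n :=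
  GradedObject.CofanMapObjFun.mk _ _ _ ((mappingCone (total.map φ (up ℤ))).X n)
    fun ⟨i, j⟩ h => ιMappingCone φ i j n h

lemma ιMappingCone_comp_eq {i j n : ℤ} (h : i + j = n) {Z : C}
    {f : (mappingCone (total.map φ (up ℤ))).X n ⟶ Z} {g : ((horizontalCone φ).X i).X j ⟶ Z}
    (hK : K.ιTotal (up ℤ) (i + 1) j (n + 1) (by dsimp; lia) ≫
      (mappingCone.inl (total.map φ (up ℤ))).v (n + 1) n (by lia) ≫ f = inlX φ j rfl ≫ g)
    (hL : L.ιTotal (up ℤ) i j n h ≫ (mappingCone.inr (total.map φ (up ℤ))).f n ≫ f =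
      ((inr φ).f i).f j ≫ g) :
    ιMappingCone φ i j n h ≫ f = g := by
  simp only [ιMappingCone, Preadditive.add_comp, Category.assoc, hK, hL]
  rw [← Category.assoc, ← Category.assoc, ← Preadditive.add_comp, fstX_inlX_add_sndX_inr_f_f,
    Category.id_comp]

lemma hom_ext_mappingCone {n : ℤ} {Z : C}
    {f g : (mappingCone (total.map φ (up ℤ))).X n ⟶ Z}
    (hfg : ∀ i j h, ιMappingCone φ i j n h ≫ f = ιMappingCone φ i j n h ≫ g) :
    f = g := by
  refine mappingCone.ext_from _ (n + 1) n rfl (total.hom_ext _ fun i j h => ?_)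
    (total.hom_ext _ fun i j h => ?_)
  · have hi : i - 1 + 1 = i := by lia
    have hn : i - 1 + j = n := by dsimp at h; lia
    simp only [← Category.assoc, ← inlX_comp_ιMappingCone φ hi rfl hn]
    simp only [Category.assoc, hfg]
  · simp only [← Category.assoc, ← inr_f_f_comp_ιMappingCone φ i j n h]
    simp only [Category.assoc, hfg]

/-- The morphism out of `Cone(Tot φ)^n` determined by its restrictions `g` to the entries of
`Cone φ` of total degree `n`. -/
noncomputable def mappingConeDesc {n : ℤ} {Z : C}
    (g : ∀ i j : ℤ, i + j = n → (((horizontalCone φ).X i).X j ⟶ Z)) :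
    (mappingCone (total.map φ (up ℤ))).X n ⟶ Z :=
  (mappingCone.fst (total.map φ (up ℤ))).1.v n (n + 1) rfl ≫
      K.totalDesc (fun i j h => inlX φ j (sub_add_cancel i 1) ≫ g (i - 1) j (by dsimp at h; lia)) +
    (mappingCone.snd (total.map φ (up ℤ))).v n n (add_zero n) ≫
      L.totalDesc fun i j h => ((inr φ).f i).f j ≫ g i j h

lemma ιTotal_inl_v_mappingConeDesc {n : ℤ} {Z : C}
    (g : ∀ i j : ℤ, i + j = n → (((horizontalCone φ).X i).X j ⟶ Z))
    {i i' j m : ℤ} (hi : i' + 1 = i) (hm : n + 1 = m) (h : i' + j = n) :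
    K.ιTotal (up ℤ) i j m (by dsimp; lia) ≫
        (mappingCone.inl (total.map φ (up ℤ))).v m n (by lia) ≫ mappingConeDesc φ g =
      inlX φ j hi ≫ g i' j h := by
  obtain rfl : i' = i - 1 := by lia
  subst hm
  simp [mappingConeDesc]

lemma ιTotal_inr_f_mappingConeDesc {n : ℤ} {Z : C}
    (g : ∀ i j : ℤ, i + j = n → (((horizontalCone φ).X i).X j ⟶ Z)) (i j : ℤ) (h : i + j = n) :
    L.ιTotal (up ℤ) i j n h ≫
        (mappingCone.inr (total.map φ (up ℤ))).f n ≫ mappingConeDesc φ g =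
      ((inr φ).f i).f j ≫ g i j h := by
  simp [mappingConeDesc]

lemma ιMappingCone_mappingConeDesc {n : ℤ} {Z : C}
    (g : ∀ i j : ℤ, i + j = n → (((horizontalCone φ).X i).X j ⟶ Z)) (i j : ℤ) (h : i + j = n) :
    ιMappingCone φ i j n h ≫ mappingConeDesc φ g = g i j h :=
  ιMappingCone_comp_eq φ h (ιTotal_inl_v_mappingConeDesc φ g rfl rfl h)
    (ιTotal_inr_f_mappingConeDesc φ g i j h)

/-- The object `Cone(Tot φ)^n` is the coproduct of the entries of `Cone φ` of total degree `n`. -/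
noncomputable def isColimitMappingConeCofan (n : ℤ) :
    IsColimit (mappingConeCofan φ n) :=
  Cofan.IsColimit.mk _ (fun s => mappingConeDesc φ fun i j h => s.inj ⟨(i, j), h⟩)
    (fun _ ⟨⟨i, j⟩, h⟩ => ιMappingCone_mappingConeDesc φ _ i j h)
    (fun s _ hm => hom_ext_mappingCone φ fun i j h =>
      (hm ⟨(i, j), h⟩).trans
        (ιMappingCone_mappingConeDesc φ (fun i j h => s.inj ⟨(i, j), h⟩) i j h).symm)

instance hasTotal : (horizontalCone φ).HasTotal (up ℤ) :=
  GradedObject.CofanMapObjFun.hasMap _ _ _ (isColimitMappingConeCofan φ)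

/-- The cochain `Tot K ⟶ Tot (Cone φ)` of degree `-1` sending the summand `K^{i,j}` to its copy in
column `i - 1` of the cone. -/
noncomputable def inlTotal : Cochain (K.total (up ℤ)) ((horizontalCone φ).total (up ℤ)) (-1) :=
  Cochain.mk fun p q hpq => K.totalDesc fun i j h =>
    inlX φ j (sub_add_cancel i 1) ≫
      (horizontalCone φ).ιTotal (up ℤ) (i - 1) j q (by dsimp at h ⊢; lia)

lemma ιTotal_inlTotal_v {i i' j p q : ℤ} (h : i + j = p) (hpq : p + -1 = q) (hi : i' + 1 = i) :
    K.ιTotal (up ℤ) i j p h ≫ (inlTotal φ).v p q hpq =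
      inlX φ j hi ≫ (horizontalCone φ).ιTotal (up ℤ) i' j q (by dsimp; lia) := by
  obtain rfl : i' = i - 1 := by lia
  simp [inlTotal]

lemma ιTotal_inlTotal_v_d {i i' i'' j j' p q : ℤ} (hi : i' + 1 = i) (hi' : i + 1 = i'')
    (hj : j + 1 = j') (h : i + j = p) (hpq : p + -1 = q) :
    K.ιTotal (up ℤ) i j p h ≫ (inlTotal φ).v p q hpq ≫
        ((horizontalCone φ).total (up ℤ)).d q p =
      (φ.f i).f j ≫ ((inr φ).f i).f j ≫ (horizontalCone φ).ιTotal (up ℤ) i j p h -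
        (K.d i i'').f j ≫ inlX φ j hi' ≫ (horizontalCone φ).ιTotal (up ℤ) i j p h +
        i'.negOnePow • (K.X i).d j j' ≫ inlX φ j' hi ≫
          (horizontalCone φ).ιTotal (up ℤ) i' j' p (by dsimp; lia) := by
  rw [← Category.assoc, ιTotal_inlTotal_v φ h hpq hi, Category.assoc,
    ιTotal_comp_total_d_up _ hi hj (by lia) h (by lia), Preadditive.comp_add,
    Linear.comp_units_smul, ← Category.assoc, ← Category.assoc, inlX_comp_d_f φ j hi hi',
    inlX_comp_X_d φ j j' hi]
  simp only [Preadditive.sub_comp, Category.assoc]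

lemma ιTotal_d_inlTotal_v {i i' i'' j j' p p' : ℤ} (hi : i' + 1 = i) (hi' : i + 1 = i'')
    (hj : j + 1 = j') (h : i + j = p) (hp : p + 1 = p') :
    K.ιTotal (up ℤ) i j p h ≫ (K.total (up ℤ)).d p p' ≫ (inlTotal φ).v p' p (by lia) =
      (K.d i i'').f j ≫ inlX φ j hi' ≫ (horizontalCone φ).ιTotal (up ℤ) i j p h +
        i.negOnePow • (K.X i).d j j' ≫ inlX φ j' hi ≫
          (horizontalCone φ).ιTotal (up ℤ) i' j' p (by dsimp; lia) := by
  rw [← Category.assoc, ιTotal_comp_total_d_up K hi' hj h (by lia : _ = p') (by lia),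
    Preadditive.add_comp, Linear.units_smul_comp, Category.assoc, Category.assoc,
    ιTotal_inlTotal_v φ _ _ hi', ιTotal_inlTotal_v φ _ _ hi]

/-- The vertical terms cancel because columns `i` and `i - 1` carry opposite signs in a total
complex. -/
lemma δ_inlTotal : δ (-1) 0 (inlTotal φ) =
    Cochain.ofHom (total.map φ (up ℤ) ≫ total.map (inr φ) (up ℤ)) := by
  ext p i j h
  dsimp at h
  have hi : i - 1 + 1 = i := sub_add_cancel i 1
  have hsign : (i - 1).negOnePow = -i.negOnePow := by
    rw [Int.negOnePow_sub, Int.negOnePow_one, mul_neg_one]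
  rw [δ_v (-1) 0 (by lia) _ p p (by lia) (p - 1) (p + 1) rfl rfl, Cochain.ofHom_v,
    HomologicalComplex.comp_f, ιTotal_map_assoc, ιTotal_map, Int.negOnePow_zero, one_smul,
    Preadditive.comp_add, ιTotal_inlTotal_v_d φ hi rfl rfl h,
    ιTotal_d_inlTotal_v φ hi rfl rfl h rfl, hsign, Units.neg_smul]
  abel

/-- The canonical morphism `Cone (Tot φ) ⟶ Tot (Cone φ)`. -/
noncomputable def totalComparison :
    mappingCone (total.map φ (up ℤ)) ⟶ (horizontalCone φ).total (up ℤ) :=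
  mappingCone.desc _ (inlTotal φ) (total.map (inr φ) (up ℤ)) (δ_inlTotal φ)

lemma ιMappingCone_comp_totalComparison_f (i j n : ℤ) (h : i + j = n) :
    ιMappingCone φ i j n h ≫ (totalComparison φ).f n =
      (horizontalCone φ).ιTotal (up ℤ) i j n h :=
  ιMappingCone_comp_eq φ h
    (by rw [totalComparison, mappingCone.inl_v_desc_f, ιTotal_inlTotal_v φ _ _ rfl])
    (by rw [totalComparison, mappingCone.inr_f_desc_f, ιTotal_map])

/-- The identification, in degree `n`, of `Cone (Tot φ)` with `Tot (Cone φ)`, as two coproducts of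
the same family. -/
noncomputable def totalXIso (n : ℤ) :
    (mappingCone (total.map φ (up ℤ))).X n ≅ ((horizontalCone φ).total (up ℤ)).X n :=
  GradedObject.CofanMapObjFun.iso (isColimitMappingConeCofan φ n)

lemma totalXIso_hom (n : ℤ) : (totalXIso φ n).hom = (totalComparison φ).f n :=
  hom_ext_mappingCone φ fun i j h =>
    (GradedObject.CofanMapObjFun.inj_iso_hom (isColimitMappingConeCofan φ n) (i, j) h).trans
      (ιMappingCone_comp_totalComparison_f φ i j n h).symm

/-- Totalization commutes with mapping cones. -/
noncomputable def totalIso :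
    mappingCone (total.map φ (up ℤ)) ≅ (horizontalCone φ).total (up ℤ) :=
  HomologicalComplex.Hom.isoOfComponents (totalXIso φ) fun p q _ => by
    rw [totalXIso_hom, totalXIso_hom, (totalComparison φ).comm]

end Total
end horizontalCone
end TotalMappingCone

/-- **Proposition 4.6(3), first part.** Let `A` be an additive category, `B` an additive
category with countable coproducts, and `F : A ⥤ C(B)` an additive functor.  Then for
every morphism `f : M → N` of cochain complexes over `A`, the image under `F^C` of the
mapping cone of `f` is isomorphic to the mapping cone of `F^C(f) : F^C(M) → F^C(N)`. -/
theorem extC_mappingCone_iso (F : A ⥤ CochainComplex B ℤ) [F.Additive]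
    {M N : CochainComplex A ℤ} (f : M ⟶ N) :
    Nonempty
      ((extC F).obj (CochainComplex.mappingCone f) ≅
        CochainComplex.mappingCone ((extC F).map f)) := by
  have e : (extDC F).obj (CochainComplex.mappingCone f) ≅ horizontalCone ((extDC F).map f) :=
    CochainComplex.mappingCone.mapHomologicalComplexIso f F
  exact ⟨HomologicalComplex₂.total.mapIso e (ComplexShape.up ℤ) ≪≫
    (horizontalCone.totalIso ((extDC F).map f)).symm⟩

end ExtensionOfFunctors
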